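/- arXiv:2404.03837 — 6 statements merged into one kernel-verified Lean document; each statement's English description precedes it below -/
import Mathlib

section
/- Knight's identity for the check function: for every τ ∈ (0,1) and all u, v ∈ ℝ, ρ_τ(u − v) − ρ_τ(u) = −v·ψ_τ(u) + ∫₀^v (1{u ≤ s} − 1{u < 0}) ds, where ∫₀^v denotes the signed Lebesgue integral (equal to −∫_v^0 when v < 0). -/
/-- The check function `ρ_τ(x) = x (τ - 1{x<0})`. -/
noncomputable def rho (τ x : ℝ) : ℝ := x * (τ - if x < 0 then 1 else 0)

/-- `ψ_τ(u) = τ - 1{u<0}`. -/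
noncomputable def psi (τ u : ℝ) : ℝ := τ - if u < 0 then 1 else 0

theorem knight_ind_integrable (u a b : ℝ) :
    IntervalIntegrable (fun s : ℝ => if u ≤ s then (1:ℝ) else 0) MeasureTheory.volume a b := by
  apply Monotone.intervalIntegrable
  intro x y hxy
  dsimp only
  split_ifs <;> linarith

theorem knight_ind_integral (u x : ℝ) :
    ∫ s in u..x, (if u ≤ s then (1:ℝ) else 0) = if u ≤ x then x - u else 0 := by
  split_ifs with h
  · rw [intervalIntegral.integral_congr (g := fun _ => (1:ℝ))]
    · simp
    · intro s hs
      rw [Set.uIcc_of_le h] at hs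
      simp [hs.1]
  · push Not at h
    apply intervalIntegral.integral_zero_ae
    have h0 : ∀ᵐ s : ℝ ∂MeasureTheory.volume, s ≠ u := by
      simp [MeasureTheory.ae_iff]
    filter_upwards [h0] with s hs hm
    rw [Set.uIoc_of_ge h.le] at hm
    rw [if_neg (not_le.mpr (lt_of_le_of_ne hm.2 hs))]

/-- Knight's identity for the check function. -/
theorem knight_identity (τ : ℝ) (hτ0 : 0 < τ) (hτ1 : τ < 1) (u v : ℝ) :
    rho τ (u - v) - rho τ u =
      -v * psi τ u +
        ∫ s in (0:ℝ)..v, ((if u ≤ s then (1:ℝ) else 0) - (if u < 0 then (1:ℝ) else 0)) := by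
  rw [intervalIntegral.integral_sub (knight_ind_integrable u 0 v) (by simp),
    ← intervalIntegral.integral_interval_sub_left (knight_ind_integrable u u v)
      (knight_ind_integrable u u 0), knight_ind_integral, knight_ind_integral,
    intervalIntegral.integral_const]
  unfold rho psi
  rw [smul_eq_mul]
  rcases lt_or_ge u 0 with h1 | h1 <;> rcases lt_or_ge u v with h2 | h2
  · simp only [h1, h2, h1.le, h2.le, sub_neg, if_true]; ring
  · rcases h2.eq_or_lt with h3 | h3
    · subst h3; simp [h1, h1.le]; try ring
    · simp only [h1, h1.le, sub_neg, not_lt.mpr h2, not_le.mpr h3, if_true, if_false]; ring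
  all_goals
    rcases h1.eq_or_lt with h4 | h4
    · subst h4
      split_ifs <;> first | linarith | nlinarith
    · split_ifs <;> first | linarith | nlinarith
end

section
/- Geometry-invariance of the metric projection onto the constraint cone: let Σ be a symmetric positive definite real p×p matrix, β ∈ Q, and x ∈ ℝ^p. Then there exists A > 0 such that for all a₁, a₂ ≥ A, P_{Q,Σ}(a₁β + x) − a₁β = P_{Q,Σ}(a₂β + x) − a₂β; in particular the limit Θ_{Q,Σ}(β, x) = lim_{n→∞} (P_{Q,Σ}(nβ + x) − nβ) exists. -/
open Matrix

/-- The metric projection `P_{C,Σ}(x) = argmin_{β ∈ C} (β - x)ᵀ Σ (β - x)`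
(chosen via the axiom of choice; for `Σ` positive definite and `C` nonempty
closed convex it is the unique minimizer). -/
noncomputable def metricProj {p : ℕ} (S : Matrix (Fin p) (Fin p) ℝ)
    (C : Set (Fin p → ℝ)) (x : Fin p → ℝ) : Fin p → ℝ :=
  Classical.epsilon fun γ => γ ∈ C ∧ ∀ β ∈ C,
    (γ - x) ⬝ᵥ S.mulVec (γ - x) ≤ (β - x) ⬝ᵥ S.mulVec (β - x)

/-- The constraint cone `Q = {β ∈ ℝ^p : β_j ≥ 0 for j = 1,…,q}`. -/
def coneQ (p q : ℕ) : Set (Fin p → ℝ) :=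
  {v | ∀ j : Fin p, (j : ℕ) < q → 0 ≤ v j}


lemma quad_lower {p : ℕ} (S : Matrix (Fin p) (Fin p) ℝ) (hpd : S.PosDef) :
    ∃ c > (0:ℝ), ∀ v : Fin p → ℝ, c * ‖v‖ ^ 2 ≤ v ⬝ᵥ S.mulVec v := by
  have hcont : Continuous fun v : Fin p → ℝ => v ⬝ᵥ S.mulVec v := by fun_prop
  rcases (Metric.sphere (0 : Fin p → ℝ) 1).eq_empty_or_nonempty with he | hne
  · refine ⟨1, one_pos, fun v => ?_⟩
    by_cases hv : v = 0
    · simp [hv]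
    · exfalso
      have : (‖v‖⁻¹ • v) ∈ Metric.sphere (0 : Fin p → ℝ) 1 := by
        simp [norm_smul, hv]
      rw [he] at this
      exact this
  · obtain ⟨u, hu, hmin⟩ := (isCompact_sphere (0 : Fin p → ℝ) 1).exists_isMinOn hne
      hcont.continuousOn
    have hu0 : u ≠ 0 := by
      rintro rfl
      simp at hu
    refine ⟨u ⬝ᵥ S.mulVec u, by simpa using hpd.dotProduct_mulVec_pos hu0, fun v => ?_⟩
    by_cases hv : v = 0
    · simp [hv]
    · have hs : (‖v‖⁻¹ • v) ∈ Metric.sphere (0 : Fin p → ℝ) 1 := by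
        simp [norm_smul, hv]
      have h := hmin hs
      simp only [Set.mem_ofPred_eq, mulVec_smul, dotProduct_smul, smul_dotProduct,
        smul_eq_mul] at h
      have hn : 0 < ‖v‖ := norm_pos_iff.mpr hv
      calc _ ≤ (‖v‖⁻¹ * (‖v‖⁻¹ * (v ⬝ᵥ S.mulVec v))) * ‖v‖ ^ 2 := by gcongr
        _ = _ := by field_simp

lemma exists_min {p : ℕ} (S : Matrix (Fin p) (Fin p) ℝ) (hpd : S.PosDef)
    (K : Set (Fin p → ℝ)) (hK : IsClosed K) (h0 : (0 : Fin p → ℝ) ∈ K) (x : Fin p → ℝ) :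
    ∃ θ ∈ K, ∀ v ∈ K, (θ - x) ⬝ᵥ S.mulVec (θ - x) ≤ (v - x) ⬝ᵥ S.mulVec (v - x) := by
  obtain ⟨c, hc, hlow⟩ := quad_lower S hpd
  have hcont : Continuous fun v : Fin p → ℝ => (v - x) ⬝ᵥ S.mulVec (v - x) := by fun_prop
  have ht : Filter.Tendsto (fun v : Fin p → ℝ => c * (‖v‖ - ‖x‖) ^ 2)
      (Filter.cocompact _) Filter.atTop := by
    refine Filter.Tendsto.const_mul_atTop hc ?_
    refine (Filter.tendsto_pow_atTop two_ne_zero).comp ?_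
    exact Filter.tendsto_atTop_add_const_right _ (-‖x‖) (tendsto_norm_cocompact_atTop)
  obtain ⟨θ, hθ, hm⟩ := hcont.continuousOn.exists_isMinOn' hK h0 (by
    refine Filter.Eventually.filter_mono inf_le_left ?_
    filter_upwards [ht.eventually_ge_atTop ((0 - x) ⬝ᵥ S.mulVec (0 - x))] with v hv
    refine hv.trans (le_trans ?_ (hlow _))
    refine mul_le_mul_of_nonneg_left ?_ hc.le
    rw [← sq_abs]
    exact pow_le_pow_left₀ (abs_nonneg _) (abs_norm_sub_norm_le v x) 2)
  exact ⟨θ, hθ, fun v hv => hm hv⟩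

lemma metricProj_eq {p q : ℕ} (S : Matrix (Fin p) (Fin p) ℝ) (hpd : S.PosDef)
    (y γ : Fin p → ℝ) (hγ : γ ∈ coneQ p q)
    (hmin : ∀ v ∈ coneQ p q, (γ - y) ⬝ᵥ S.mulVec (γ - y) ≤ (v - y) ⬝ᵥ S.mulVec (v - y)) :
    metricProj S (coneQ p q) y = γ := by
  obtain ⟨hδ, hδm⟩ : metricProj S (coneQ p q) y ∈ coneQ p q ∧ ∀ v ∈ coneQ p q,
      (metricProj S (coneQ p q) y - y) ⬝ᵥ S.mulVec (metricProj S (coneQ p q) y - y)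
        ≤ (v - y) ⬝ᵥ S.mulVec (v - y) :=
    Classical.epsilon_spec (p := fun γ => γ ∈ coneQ p q ∧ ∀ β ∈ coneQ p q,
      (γ - y) ⬝ᵥ S.mulVec (γ - y) ≤ (β - y) ⬝ᵥ S.mulVec (β - y)) ⟨γ, hγ, hmin⟩
  generalize metricProj S (coneQ p q) y = δ at hδ hδm
  by_contra hne
  have hpos : 0 < (δ - γ) ⬝ᵥ S.mulVec (δ - γ) := by
    simpa using hpd.dotProduct_mulVec_pos (sub_ne_zero.mpr hne)
  have hmid : (2⁻¹ : ℝ) • (δ + γ) ∈ coneQ p q := by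
    intro j hj
    have h1 := hδ j hj
    have h2 := hγ j hj
    simp only [Pi.smul_apply, Pi.add_apply, smul_eq_mul]
    positivity
  have h1 := hmin _ hmid
  have h2 := hδm _ hmid
  have e1 : (2⁻¹ : ℝ) • (δ + γ) - y = (2⁻¹ : ℝ) • ((δ - y) + (γ - y)) := by
    ext j; simp; ring
  have e2 : δ - γ = (δ - y) - (γ - y) := by abel
  rw [e1] at h1 h2
  rw [e2] at hpos
  simp only [mulVec_smul, dotProduct_smul, smul_dotProduct, smul_eq_mul] at h1 h2
  generalize δ - y = u at *
  generalize γ - y = w at *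
  simp only [mulVec_add, mulVec_sub, dotProduct_add, add_dotProduct, dotProduct_sub,
    sub_dotProduct] at *
  linarith

/-- Geometry-invariance of the metric projection onto the constraint cone, and
existence of the limit `Θ_{Q,Σ}(β,x) = lim_n (P_{Q,Σ}(nβ + x) - nβ)`. -/
theorem metric_projection_geometry_invariance {p q : ℕ} (hq : 1 ≤ q) (hqp : q ≤ p)
    (S : Matrix (Fin p) (Fin p) ℝ) (hsymm : S.IsSymm) (hpd : S.PosDef)
    (β : Fin p → ℝ) (hβ : β ∈ coneQ p q) (x : Fin p → ℝ) :
    (∃ A > (0:ℝ), ∀ a₁ a₂ : ℝ, A ≤ a₁ → A ≤ a₂ →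
      metricProj S (coneQ p q) (a₁ • β + x) - a₁ • β =
        metricProj S (coneQ p q) (a₂ • β + x) - a₂ • β) ∧
    ∃ L : Fin p → ℝ,
      Filter.Tendsto
        (fun n : ℕ => metricProj S (coneQ p q) ((n : ℝ) • β + x) - (n : ℝ) • β)
        Filter.atTop (nhds L) := by
  have key : ∃ θ : Fin p → ℝ, ∃ A > (0:ℝ), ∀ a : ℝ, A ≤ a →
      metricProj S (coneQ p q) (a • β + x) - a • β = θ := by
    obtain ⟨θ, hθ, hm⟩ := exists_min S hpd
      {v | ∀ j : Fin p, (j : ℕ) < q → β j = 0 → 0 ≤ v j}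
      (by
        simp only [Set.ofPred_forall]
        refine isClosed_iInter fun j => isClosed_iInter fun _ => isClosed_iInter fun _ => ?_
        exact isClosed_le continuous_const (continuous_apply j))
      (by intro j _ _; simp) x
    refine ⟨θ, 1 + ∑ j, |θ j| / |β j|, ?_, fun a ha => ?_⟩
    · have : 0 ≤ ∑ j, |θ j| / |β j| := Finset.sum_nonneg fun j _ => by positivity
      linarith
    · rw [sub_eq_iff_eq_add]
      refine metricProj_eq S hpd _ _ ?_ ?_
      · intro j hj
        simp only [Pi.add_apply, Pi.smul_apply, smul_eq_mul]
        by_cases hb : β j = 0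
        · simpa [hb] using hθ j hj hb
        · have hbp : 0 < β j := lt_of_le_of_ne (hβ j hj) (Ne.symm hb)
          have h1 : |θ j| / |β j| ≤ ∑ j, |θ j| / |β j| :=
            Finset.single_le_sum (f := fun j => |θ j| / |β j|)
              (fun j _ => by positivity) (Finset.mem_univ j)
          have h2 : |θ j| / |β j| ≤ a := by linarith
          rw [abs_of_pos hbp, div_le_iff₀ hbp] at h2
          have := neg_abs_le (θ j)
          linarith
      · intro v hv
        have h := hm (v - a • β) (by
          intro j hj hb
          simpa [hb] using hv j hj)
        have e1 : θ + a • β - (a • β + x) = θ - x := by abel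
        have e2 : v - (a • β + x) = v - a • β - x := by abel
        rw [e1, e2]
        exact h
  obtain ⟨θ, A, hA, h⟩ := key
  refine ⟨⟨A, hA, fun a₁ a₂ h1 h2 => by rw [h a₁ h1, h a₂ h2]⟩, θ, ?_⟩
  refine tendsto_const_nhds.congr' ?_
  filter_upwards [tendsto_natCast_atTop_atTop.eventually_ge_atTop A] with n hn
  exact (h n hn).symm
end

section
/- Exact expected check-loss increment: let X be a real-valued random variable whose law is atomless and whose cumulative distribution function F(s) = P(X ≤ s) satisfies F(0) = τ for some τ ∈ (0,1). Then for every v ∈ ℝ, E[ρ_τ(X − v) − ρ_τ(X)] = ∫₀^v (F(s) − τ) ds, where ∫₀^v denotes the signed Lebesgue integral; in particular the expectation is finite. -/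
open MeasureTheory

/-- The check function as a linear part plus a positive part. -/
lemma rho_eq_max (τ y : ℝ) : rho τ y = τ * y + max (-y) 0 := by
  unfold rho
  split_ifs with h
  · rw [max_eq_left (by linarith)]; ring
  · rw [max_eq_right (by linarith)]; ring

/-- Pointwise (Knight-type) identity. -/
lemma rho_sub_eq_integral (τ x v : ℝ) :
    ∫ s in (0:ℝ)..v, ((if x ≤ s then (1:ℝ) else 0) - τ) = rho τ (x - v) - rho τ x := by
  have key := intervalIntegral.integral_eq_sub_of_hasDeriv_right (a := 0) (b := v)
    (f := fun s => rho τ (x - s)) (f' := fun s => (if x ≤ s then (1:ℝ) else 0) - τ) ?_ ?_ ?_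
  · simpa using key
  · simp only [rho_eq_max]
    fun_prop
  · intro s _
    simp only [rho_eq_max]
    by_cases h : x ≤ s
    · have h1 : HasDerivWithinAt (fun s : ℝ => τ * (x - s) + (s - x)) (1 - τ) (Set.Ioi s) s := by
        have := (((hasDerivAt_id s).const_sub x).const_mul τ).add ((hasDerivAt_id s).sub_const x)
        exact (this.congr_deriv (by ring)).hasDerivWithinAt
      simp only [h, if_true]
      refine h1.congr ?_ ?_
      · intro t ht
        have ht' : s < t := ht
        rw [max_eq_left (by linarith)]; ring
      · rw [max_eq_left (by linarith)]; ring
    · have h1 : HasDerivAt (fun s : ℝ => τ * (x - s)) (0 - τ) s := by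
        have := (((hasDerivAt_id s).const_sub x).const_mul τ)
        exact this.congr_deriv (by ring)
      simp only [h, if_false]
      refine (h1.congr_of_eventuallyEq ?_).hasDerivWithinAt
      filter_upwards [Iio_mem_nhds (not_le.mp h)] with t ht
      have ht' : t < x := ht
      rw [max_eq_right (by linarith)]; ring
  · apply Monotone.intervalIntegrable
    intro a b hab
    dsimp only
    split_ifs <;> linarith

/-- Exact expected check-loss increment for an atomless random variable whose
CDF satisfies `F(0) = τ`. -/
theorem expected_check_loss_increment {Ω : Type*} [MeasurableSpace Ω]
    (μ : Measure Ω) [IsProbabilityMeasure μ] (X : Ω → ℝ) (hX : Measurable X)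
    (hatomless : NoAtoms (μ.map X)) (τ : ℝ) (hτ0 : 0 < τ) (hτ1 : τ < 1)
    (hF0 : (μ {ω | X ω ≤ 0}).toReal = τ) (v : ℝ) :
    Integrable (fun ω => rho τ (X ω - v) - rho τ (X ω)) μ ∧
      ∫ ω, (rho τ (X ω - v) - rho τ (X ω)) ∂μ =
        ∫ s in (0:ℝ)..v, ((μ {ω | X ω ≤ s}).toReal - τ) := by
  have hmeas : Measurable (Function.uncurry
      (fun (s : ℝ) (ω : Ω) => (if X ω ≤ s then (1:ℝ) else 0) - τ)) := by
    refine Measurable.sub_const (Measurable.ite ?_ measurable_const measurable_const) τ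
    exact measurableSet_le (hX.comp measurable_snd) measurable_fst
  have hint : Integrable (Function.uncurry
      (fun (s : ℝ) (ω : Ω) => (if X ω ≤ s then (1:ℝ) else 0) - τ))
      ((volume.restrict (Set.uIoc 0 v)).prod μ) := by
    have : IsFiniteMeasure (volume.restrict (Set.uIoc (0:ℝ) v)) :=
      ⟨by rw [Measure.restrict_apply_univ, Set.uIoc]; exact measure_Ioc_lt_top⟩
    refine Integrable.of_bound hmeas.aestronglyMeasurable 1 (Filter.Eventually.of_forall ?_)
    rintro ⟨s, ω⟩
    simp only [Function.uncurry, Real.norm_eq_abs, abs_le]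
    split_ifs <;> constructor <;> linarith
  refine ⟨?_, ?_⟩
  · have h := hint.integral_prod_right
    have h2 := h.const_mul (if (0:ℝ) ≤ v then (1:ℝ) else -1)
    refine h2.congr (Filter.Eventually.of_forall fun ω => ?_)
    simp only [← rho_sub_eq_integral, intervalIntegral.intervalIntegral_eq_integral_uIoc,
      Function.uncurry, smul_eq_mul]
  · simp only [← rho_sub_eq_integral]
    rw [← intervalIntegral_integral_swap hint]
    refine intervalIntegral.integral_congr fun s _ => ?_
    have hs : MeasurableSet {ω | X ω ≤ s} := measurableSet_le hX measurable_const
    have hi : (fun ω => if X ω ≤ s then (1:ℝ) else 0)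
        = Set.indicator {ω | X ω ≤ s} (fun _ => (1:ℝ)) := by
      funext ω
      simp [Set.indicator_apply]
    have hii : Integrable (fun ω => if X ω ≤ s then (1:ℝ) else 0) μ := by
      rw [hi]
      exact (integrable_const 1).indicator hs
    rw [integral_sub hii (integrable_const τ), hi, integral_indicator hs]
    simp [Measure.real]
end

section
/- Second-order expansion of the expected check loss: let τ ∈ (0,1) and let X be a real-valued random variable with Lebesgue density f whose cumulative distribution function F satisfies F(0) = τ, and suppose there are constants c > 0 and M ≥ 0 such that |f(t) − f(0)| ≤ M|t| for all |t| ≤ c. Then for every v with |v| ≤ c, |E[ρ_τ(X − v) − ρ_τ(X)] − (1/2) f(0) v²| ≤ M|v|³/6. -/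
open MeasureTheory

lemma rho_diff (τ v x : ℝ) : rho τ (x - v) - rho τ x =
    (-v * τ + (Set.Iic (0:ℝ)).indicator (fun _ => v) x)
      + (Set.uIoc 0 v).indicator (fun x => |x - v|) x := by
  unfold rho
  by_cases hx : x ∈ Set.uIoc 0 v <;>
    [rw [Set.indicator_of_mem hx]; rw [Set.indicator_of_notMem hx]] <;>
    rw [Set.mem_uIoc] at hx <;>
    simp only [Set.indicator_apply, Set.mem_Iic] <;>
  rcases abs_cases (x - v) with ⟨h, h'⟩ | ⟨h, h'⟩ <;> split_ifs <;> grind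

lemma int_A (v : ℝ) : ∫ x in Set.uIoc 0 v, |x - v| = v ^ 2 / 2 := by
  rcases le_total 0 v with h | h
  · rw [Set.uIoc_of_le h, setIntegral_congr_fun (g := fun x => v - x) measurableSet_Ioc,
      ← intervalIntegral.integral_of_le h]
    · rw [intervalIntegral.integral_sub (by simp) (by simp)]
      simp
      ring
    · intro x hx
      have := hx.2
      simp only
      rw [abs_of_nonpos (by linarith)]; ring
  · rw [Set.uIoc_of_ge h, setIntegral_congr_fun (g := fun x => x - v) measurableSet_Ioc,
      ← intervalIntegral.integral_of_le h]
    · rw [intervalIntegral.integral_sub (by simp) (by simp)]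
      simp
      ring
    · intro x hx
      have := hx.1
      simp only
      rw [abs_of_nonneg (by linarith)]

lemma int_B (v : ℝ) : ∫ x in Set.uIoc 0 v, |x - v| * |x| = |v| ^ 3 / 6 := by
  rcases le_total 0 v with h | h
  · rw [Set.uIoc_of_le h, setIntegral_congr_fun (g := fun x => v * x - x ^ 2) measurableSet_Ioc,
      ← intervalIntegral.integral_of_le h]
    · rw [intervalIntegral.integral_sub (Continuous.intervalIntegrable (by fun_prop) _ _)
        (Continuous.intervalIntegrable (by fun_prop) _ _), abs_of_nonneg h,
        intervalIntegral.integral_const_mul, integral_id, integral_pow]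
      norm_num
      ring
    · intro x hx
      have := hx.2
      simp only
      rw [abs_of_nonpos (by linarith), abs_of_nonneg hx.1.le]; ring
  · rw [Set.uIoc_of_ge h, setIntegral_congr_fun (g := fun x => v * x - x ^ 2) measurableSet_Ioc,
      ← intervalIntegral.integral_of_le h]
    · rw [intervalIntegral.integral_sub (Continuous.intervalIntegrable (by fun_prop) _ _)
        (Continuous.intervalIntegrable (by fun_prop) _ _), abs_of_nonpos h,
        intervalIntegral.integral_const_mul, integral_id, integral_pow]
      norm_num
      ring
    · intro x hx
      have := hx.1
      simp only
      rw [abs_of_nonneg (by linarith), abs_of_nonpos hx.2]; ring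

lemma uIoc_abs {v x : ℝ} (hx : x ∈ Set.uIoc 0 v) : |x| ≤ |v| ∧ |x - v| ≤ |v| := by
  rw [Set.mem_uIoc] at hx
  grind

lemma intOn {v : ℝ} {g : ℝ → ℝ} (hg : Measurable g) (C : ℝ)
    (h : ∀ x ∈ Set.uIoc 0 v, |g x| ≤ C) : IntegrableOn g (Set.uIoc 0 v) := by
  refine Measure.integrableOn_of_bounded (M := C) ?_ hg.aestronglyMeasurable ?_
  · simp [Set.uIoc]
  · exact (ae_restrict_iff' measurableSet_uIoc).2 (Filter.Eventually.of_forall h)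

/-- Second-order expansion of the expected check loss for a random variable
with a Lebesgue density `f` that is `M`-Lipschitz-at-`0` on `[-c, c]` and whose
CDF satisfies `F(0) = τ`. -/
theorem expected_check_loss_second_order {Ω : Type*} [MeasurableSpace Ω]
    (μ : Measure Ω) [IsProbabilityMeasure μ] (X : Ω → ℝ) (hX : Measurable X)
    (τ : ℝ) (hτ0 : 0 < τ) (hτ1 : τ < 1)
    (f : ℝ → ℝ) (hf_nonneg : ∀ t, 0 ≤ f t) (hf_meas : Measurable f)
    (hdens : μ.map X = volume.withDensity (fun t => ENNReal.ofReal (f t)))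
    (hF0 : (μ {ω | X ω ≤ 0}).toReal = τ)
    (c : ℝ) (hc : 0 < c) (M : ℝ) (hM : 0 ≤ M)
    (hlip : ∀ t : ℝ, |t| ≤ c → |f t - f 0| ≤ M * |t|) :
    ∀ v : ℝ, |v| ≤ c →
      |(∫ ω, (rho τ (X ω - v) - rho τ (X ω)) ∂μ) - (1/2) * f 0 * v ^ 2| ≤
        M * |v| ^ 3 / 6 := by
  intro v hv
  have mg : Measurable ((Set.uIoc 0 v).indicator (fun x => |x - v|)) :=
    Measurable.indicator (by fun_prop) measurableSet_uIoc
  have m1 : Measurable ((Set.Iic (0:ℝ)).indicator (fun _ => v)) :=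
    measurable_const.indicator measurableSet_Iic
  have bg : ∀ x, ‖(Set.uIoc 0 v).indicator (fun x => |x - v|) x‖ ≤ |v| := by
    intro x
    by_cases hx : x ∈ Set.uIoc 0 v
    · simpa [hx] using (uIoc_abs hx).2
    · simp [hx]
  have b1 : ∀ x, ‖(Set.Iic (0:ℝ)).indicator (fun _ => v) x‖ ≤ |v| := by
    intro x
    by_cases hx : x ∈ Set.Iic (0:ℝ)
    · rw [Set.indicator_of_mem hx]; rfl
    · rw [Set.indicator_of_notMem hx]; simp
  have ig : Integrable (fun ω => (Set.uIoc 0 v).indicator (fun x => |x - v|) (X ω)) μ :=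
    Integrable.of_bound (mg.comp hX).aestronglyMeasurable |v|
      (Filter.Eventually.of_forall fun ω => bg _)
  have i1 : Integrable (fun ω => (Set.Iic (0:ℝ)).indicator (fun _ => v) (X ω)) μ :=
    Integrable.of_bound (m1.comp hX).aestronglyMeasurable |v|
      (Filter.Eventually.of_forall fun ω => b1 _)
  have e1 : ∫ ω, (Set.Iic (0:ℝ)).indicator (fun _ => v) (X ω) ∂μ = τ * v := by
    have : (fun ω => (Set.Iic (0:ℝ)).indicator (fun _ => v) (X ω))
        = {ω | X ω ≤ 0}.indicator (fun _ => v) := by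
      ext ω; simp [Set.indicator_apply]
    rw [this, integral_indicator_const _ (measurableSet_le hX measurable_const), smul_eq_mul,
      Measure.real, hF0]
  have eg : ∫ ω, (Set.uIoc 0 v).indicator (fun x => |x - v|) (X ω) ∂μ
      = ∫ x in Set.uIoc 0 v, |x - v| * f x := by
    rw [← integral_map hX.aemeasurable mg.aestronglyMeasurable, hdens,
      integral_withDensity_eq_integral_toReal_smul (by fun_prop) (by simp),
      ← integral_indicator measurableSet_uIoc]
    congr 1
    ext x
    by_cases hx : x ∈ Set.uIoc 0 v
    · simp [hx, hf_nonneg, mul_comm]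
    · simp [hx]
  have key : ∫ ω, (rho τ (X ω - v) - rho τ (X ω)) ∂μ = ∫ x in Set.uIoc 0 v, |x - v| * f x := by
    simp_rw [rho_diff]
    have i2 : Integrable (fun ω => -v * τ + (Set.Iic (0:ℝ)).indicator (fun _ => v) (X ω)) μ :=
      (integrable_const _).add i1
    rw [integral_add i2 ig, integral_add (integrable_const _) i1,
      e1, eg]
    simp
    ring
  have hb : ∀ x ∈ Set.uIoc 0 v, |f x - f 0| ≤ M * |x| := fun x hx =>
    hlip x ((uIoc_abs hx).1.trans hv)
  have J1 : IntegrableOn (fun x => |x - v| * (f x - f 0)) (Set.uIoc 0 v) := by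
    refine intOn (by fun_prop) (|v| * (M * |v|)) fun x hx => ?_
    rw [abs_mul, abs_abs]
    have h1 := uIoc_abs hx
    have h2 := hb x hx
    have h3 : M * |x| ≤ M * |v| := mul_le_mul_of_nonneg_left h1.1 hM
    exact mul_le_mul h1.2 (h2.trans h3) (abs_nonneg _) (abs_nonneg _)
  have J2 : IntegrableOn (fun x => |x - v| * f 0) (Set.uIoc 0 v) := by
    have : IntegrableOn (fun x => |x - v|) (Set.uIoc 0 v) :=
      intOn (by fun_prop) |v| fun x hx => by
        rw [abs_abs]; exact (uIoc_abs hx).2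
    exact Integrable.mul_const this _
  have J3 : IntegrableOn (fun x => M * (|x - v| * |x|)) (Set.uIoc 0 v) := by
    have : IntegrableOn (fun x => |x - v| * |x|) (Set.uIoc 0 v) :=
      intOn (by fun_prop) (|v| * |v|) fun x hx => by
        rw [abs_mul, abs_abs, abs_abs]
        exact mul_le_mul (uIoc_abs hx).2 (uIoc_abs hx).1 (abs_nonneg _) (abs_nonneg _)
    exact Integrable.const_mul this _
  have split : ∫ x in Set.uIoc 0 v, |x - v| * f x
      = (∫ x in Set.uIoc 0 v, |x - v| * (f x - f 0)) + v ^ 2 / 2 * f 0 := by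
    rw [← int_A v, ← integral_mul_const, ← integral_add J1 J2]
    congr 1
    ext x
    ring
  rw [key, split]
  have : (∫ x in Set.uIoc 0 v, |x - v| * (f x - f 0)) + v ^ 2 / 2 * f 0 - 1 / 2 * f 0 * v ^ 2
      = ∫ x in Set.uIoc 0 v, |x - v| * (f x - f 0) := by ring
  rw [this, mul_div_assoc, ← int_B v, ← integral_const_mul, ← Real.norm_eq_abs]
  refine norm_integral_le_of_norm_le J3 ((ae_restrict_iff' measurableSet_uIoc).2
    (Filter.Eventually.of_forall fun x hx => ?_))
  rw [Real.norm_eq_abs, abs_mul, abs_abs]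
  have := mul_le_mul_of_nonneg_left (hb x hx) (abs_nonneg (x - v))
  linarith
end

section
/- Localization of minimizers under uniform quadratic approximation (unconstrained): let K be a symmetric positive definite real p×p matrix with smallest eigenvalue λ > 0, let f : ℝ^p → ℝ be convex, let β̄ ∈ ℝ^p, r > 0, and 0 ≤ ε < λr²/2. If |f(β) − f(β̄) − (1/2)(β − β̄)ᵀK(β − β̄)| ≤ ε for every β with ‖β − β̄‖ ≤ r, then every β ∈ ℝ^p with f(β) ≤ f(β̄) satisfies ‖β − β̄‖ < r; in particular every global minimizer of f lies in the open ball of radius r around β̄. -/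
open Matrix

/-- The Euclidean norm on `ℝ^p`. -/
noncomputable def euclNorm {p : ℕ} (v : Fin p → ℝ) : ℝ :=
  Real.sqrt (∑ i, v i ^ 2)

open scoped MatrixOrder in
lemma rayleigh_lower {p : ℕ} (K : Matrix (Fin p) (Fin p) ℝ) (hK : K.IsHermitian)
    (lam : ℝ) (hl : ∀ i, lam ≤ hK.eigenvalues i) (v : Fin p → ℝ) :
    lam * ∑ i, v i ^ 2 ≤ v ⬝ᵥ K.mulVec v := by
  have h1 : algebraMap ℝ (Matrix (Fin p) (Fin p) ℝ) lam ≤ K := by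
    apply algebraMap_le_of_le_spectrum
    · intro x hx
      rw [hK.spectrum_real_eq_range_eigenvalues] at hx
      obtain ⟨i, rfl⟩ := hx
      exact hl i
    · exact hK
  rw [Matrix.le_iff] at h1
  have h2 := h1.dotProduct_mulVec_nonneg v
  have h3 : (algebraMap ℝ (Matrix (Fin p) (Fin p) ℝ) lam) *ᵥ v = lam • v := by
    rw [Algebra.algebraMap_eq_smul_one, Matrix.smul_mulVec, Matrix.one_mulVec]
  have h4 : v ⬝ᵥ v = ∑ i, v i ^ 2 := by
    simp [dotProduct, sq]
  rw [Matrix.sub_mulVec, h3, dotProduct_sub, dotProduct_smul, star_trivial, h4, smul_eq_mul] at h2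
  linarith

lemma euclNorm_smul {p : ℕ} (t : ℝ) (ht : 0 ≤ t) (v : Fin p → ℝ) :
    euclNorm (t • v) = t * euclNorm v := by
  unfold euclNorm
  simp only [Pi.smul_apply, smul_eq_mul, mul_pow, ← Finset.mul_sum]
  rw [Real.sqrt_mul (sq_nonneg t), Real.sqrt_sq ht]

lemma euclNorm_sq {p : ℕ} (v : Fin p → ℝ) : euclNorm v ^ 2 = ∑ i, v i ^ 2 :=
  Real.sq_sqrt (Finset.sum_nonneg fun i _ => sq_nonneg (v i))

/-- Localization of minimizers under uniform quadratic approximation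
(unconstrained): if a convex `f` is within `ε` of the quadratic
`β ↦ (1/2)(β-β̄)ᵀK(β-β̄)` (up to the constant `f(β̄)`) on the ball of radius `r`
around `β̄`, with `ε < λ r² / 2` and `λ` the smallest eigenvalue of `K`, then
any point at which `f` does not exceed `f(β̄)` lies in the open ball, and in
particular so does every global minimizer of `f`. -/
theorem localization_unconstrained {p : ℕ}
    (K : Matrix (Fin p) (Fin p) ℝ) (hsymm : K.IsSymm) (hpd : K.PosDef)
    (lam : ℝ) (hlam : IsLeast (Set.range hpd.1.eigenvalues) lam) (hlam_pos : 0 < lam)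
    (f : (Fin p → ℝ) → ℝ) (hf : ConvexOn ℝ Set.univ f)
    (βbar : Fin p → ℝ) (r : ℝ) (hr : 0 < r) (ε : ℝ) (hε0 : 0 ≤ ε)
    (hε : ε < lam * r ^ 2 / 2)
    (happrox : ∀ β : Fin p → ℝ, euclNorm (β - βbar) ≤ r →
      |f β - f βbar - (1/2) * ((β - βbar) ⬝ᵥ K.mulVec (β - βbar))| ≤ ε) :
    (∀ β : Fin p → ℝ, f β ≤ f βbar → euclNorm (β - βbar) < r) ∧
    (∀ β : Fin p → ℝ, (∀ β' : Fin p → ℝ, f β ≤ f β') → euclNorm (β - βbar) < r) := by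
  have main : ∀ β : Fin p → ℝ, f β ≤ f βbar → euclNorm (β - βbar) < r := by
    intro β hβ
    by_contra! hn
    have hn0 : 0 < euclNorm (β - βbar) := hr.trans_le hn
    obtain ⟨t, ht⟩ : ∃ t, t = r / euclNorm (β - βbar) := ⟨_, rfl⟩
    have ht0 : 0 ≤ t := by rw [ht]; positivity
    have ht1 : t ≤ 1 := by rw [ht]; exact (div_le_one hn0).2 hn
    have hc := hf.2 (Set.mem_univ βbar) (Set.mem_univ β) (sub_nonneg.2 ht1) ht0 (by ring)
    have hγ : ((1 - t) • βbar + t • β) - βbar = t • (β - βbar) := by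
      ext i
      simp only [Pi.add_apply, Pi.sub_apply, Pi.smul_apply, smul_eq_mul]
      ring
    have hnorm : euclNorm (((1 - t) • βbar + t • β) - βbar) = r := by
      rw [hγ, euclNorm_smul t ht0, ht, div_mul_cancel₀ _ hn0.ne']
    have ha := (abs_le.1 (happrox _ hnorm.le)).1
    have hq := rayleigh_lower K hpd.1 lam (fun i => hlam.2 ⟨i, rfl⟩)
      (((1 - t) • βbar + t • β) - βbar)
    rw [← euclNorm_sq, hnorm] at hq
    simp only [smul_eq_mul] at hc
    have := mul_le_mul_of_nonneg_left hβ ht0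
    linarith
  exact ⟨main, fun β hβ => main β (hβ βbar)⟩
end

section
/- Localization of constrained minimizers under uniform quadratic approximation: let K be a symmetric positive definite real p×p matrix with smallest eigenvalue λ > 0, b ∈ ℝ^p, Q ⊆ ℝ^p a nonempty closed convex set, q(β) = (1/2)βᵀKβ − bᵀβ, and let γ be the unique minimizer of q over Q. Let f : ℝ^p → ℝ be convex, r > 0, and 0 ≤ ε < λr²/2. If |(f(β) − f(γ)) − (q(β) − q(γ))| ≤ ε for every β ∈ Q with ‖β − γ‖ ≤ r, then every β ∈ Q with f(β) ≤ f(γ) satisfies ‖β − γ‖ < r; in particular every minimizer of f over Q lies in the open ball of radius r around γ. -/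
open Matrix

/-- The quadratic `q(β) = (1/2) βᵀ K β - bᵀ β`. -/
noncomputable def quadObj {p : ℕ} (K : Matrix (Fin p) (Fin p) ℝ)
    (b : Fin p → ℝ) (β : Fin p → ℝ) : ℝ :=
  (1/2) * (β ⬝ᵥ K.mulVec β) - b ⬝ᵥ β

lemma rayleigh_aux {p : ℕ} (K : Matrix (Fin p) (Fin p) ℝ) (hK : K.IsHermitian)
    (lam : ℝ) (hlam : ∀ i, lam ≤ hK.eigenvalues i) (v : Fin p → ℝ) :
    lam * ∑ i, v i ^ 2 ≤ v ⬝ᵥ K.mulVec v := by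
  have hH : (K - algebraMap ℝ _ lam).IsHermitian := by
    refine hK.sub ?_
    rw [Matrix.algebraMap_eq_diagonal]
    exact Matrix.isHermitian_diagonal _
  have hP : (K - algebraMap ℝ _ lam).PosSemidef := by
    rw [hH.posSemidef_iff_eigenvalues_nonneg]
    intro i
    have h1 := hH.eigenvalues_mem_spectrum_real i
    have h2 : hH.eigenvalues i + lam ∈ spectrum ℝ K := by
      rw [spectrum.mem_iff] at h1 ⊢
      rw [map_add]
      convert h1 using 2
      abel
    rw [hK.spectrum_real_eq_range_eigenvalues] at h2
    obtain ⟨j, hj⟩ := h2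
    have := hlam j
    simp only [Pi.zero_apply]
    linarith
  have h := hP.dotProduct_mulVec_nonneg v
  have e : star v ⬝ᵥ (K - algebraMap ℝ _ lam) *ᵥ v
      = v ⬝ᵥ K.mulVec v - lam * ∑ i, v i ^ 2 := by
    rw [Matrix.sub_mulVec, Algebra.algebraMap_eq_smul_one, Matrix.smul_mulVec, Matrix.one_mulVec]
    rw [dotProduct_sub, dotProduct_smul]
    simp [dotProduct, pow_two]
  rw [e] at h
  linarith

lemma quad_expand {p : ℕ} (K : Matrix (Fin p) (Fin p) ℝ) (hs : K.IsSymm)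
    (b g d : Fin p → ℝ) (s : ℝ) :
    quadObj K b (g + s • d) - quadObj K b g
      = s * (g ⬝ᵥ K.mulVec d - b ⬝ᵥ d) + s ^ 2 / 2 * (d ⬝ᵥ K.mulVec d) := by
  have e : d ⬝ᵥ K.mulVec g = g ⬝ᵥ K.mulVec d := by
    rw [Matrix.dotProduct_mulVec, ← Matrix.mulVec_transpose, hs.eq, dotProduct_comm]
  unfold quadObj
  simp only [Matrix.mulVec_add, Matrix.mulVec_smul, add_dotProduct, dotProduct_add,
    smul_dotProduct, dotProduct_smul, smul_eq_mul, e]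
  ring

lemma first_order_aux (g D : ℝ) (hD : 0 ≤ D)
    (h : ∀ s : ℝ, 0 ≤ s → s ≤ 1 → 0 ≤ s * g + s ^ 2 / 2 * D) : 0 ≤ g := by
  by_contra! hg
  have hpos : 0 < D - g := by linarith
  have hs : 0 < -g / (D - g) := div_pos (by linarith) hpos
  have := h (-g / (D - g)) hs.le (by rw [div_le_one hpos]; linarith)
  have e : -g / (D - g) * g + (-g / (D - g)) ^ 2 / 2 * D
      = (-g / (D - g)) * (g * (D - 2 * g) / (2 * (D - g))) := by
    field_simp
    ring
  rw [e] at this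
  have : g * (D - 2 * g) / (2 * (D - g)) < 0 :=
    div_neg_of_neg_of_pos (mul_neg_of_neg_of_pos hg (by linarith)) (by linarith)
  nlinarith

/-- Localization of constrained minimizers under uniform quadratic
approximation: if a convex `f` is within `ε` of the quadratic `q` (up to
constants) on `Q` intersected with the ball of radius `r` around the unique
constrained minimizer `γ` of `q`, with `ε < λ r² / 2` and `λ` the smallest
eigenvalue of `K`, then any point of `Q` at which `f` does not exceed `f(γ)`
lies in the open ball, and in particular so does every minimizer of `f`
over `Q`. -/
theorem localization_constrained {p : ℕ}
    (K : Matrix (Fin p) (Fin p) ℝ) (hsymm : K.IsSymm) (hpd : K.PosDef)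
    (lam : ℝ) (hlam : IsLeast (Set.range hpd.1.eigenvalues) lam) (hlam_pos : 0 < lam)
    (b : Fin p → ℝ) (Q : Set (Fin p → ℝ)) (hne : Q.Nonempty) (hcl : IsClosed Q)
    (hconv : Convex ℝ Q)
    (γ : Fin p → ℝ) (hγQ : γ ∈ Q) (hγmin : ∀ β ∈ Q, quadObj K b γ ≤ quadObj K b β)
    (hγuniq : ∀ γ' ∈ Q, (∀ β ∈ Q, quadObj K b γ' ≤ quadObj K b β) → γ' = γ)
    (f : (Fin p → ℝ) → ℝ) (hf : ConvexOn ℝ Set.univ f)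
    (r : ℝ) (hr : 0 < r) (ε : ℝ) (hε0 : 0 ≤ ε) (hε : ε < lam * r ^ 2 / 2)
    (happrox : ∀ β ∈ Q, euclNorm (β - γ) ≤ r →
      |(f β - f γ) - (quadObj K b β - quadObj K b γ)| ≤ ε) :
    (∀ β ∈ Q, f β ≤ f γ → euclNorm (β - γ) < r) ∧
    (∀ β ∈ Q, (∀ β' ∈ Q, f β ≤ f β') → euclNorm (β - γ) < r) := by
  have key : ∀ β ∈ Q, f β ≤ f γ → euclNorm (β - γ) < r := by
    intro β hβ hfβ
    by_contra! hge
    have hNpos : 0 < euclNorm (β - γ) := lt_of_lt_of_le hr hge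
    have hNsq : euclNorm (β - γ) ^ 2 = ∑ i, (β - γ) i ^ 2 :=
      Real.sq_sqrt (Finset.sum_nonneg fun i _ => sq_nonneg _)
    obtain ⟨t, ht⟩ : ∃ t, t = r / euclNorm (β - γ) := ⟨_, rfl⟩
    have ht0 : 0 < t := by rw [ht]; positivity
    have ht1 : t ≤ 1 := by rw [ht, div_le_one hNpos]; exact hge
    have htN : t * euclNorm (β - γ) = r := by rw [ht]; field_simp
    have hmem : ∀ s : ℝ, 0 ≤ s → s ≤ 1 → γ + s • (β - γ) ∈ Q := fun s h0 h1 =>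
      hconv.add_smul_sub_mem hγQ hβ ⟨h0, h1⟩
    have hR := rayleigh_aux K hpd.1 lam (fun i => hlam.2 ⟨i, rfl⟩) (β - γ)
    rw [← hNsq] at hR
    have hg := first_order_aux (γ ⬝ᵥ K.mulVec (β - γ) - b ⬝ᵥ (β - γ))
      ((β - γ) ⬝ᵥ K.mulVec (β - γ)) (le_trans (by positivity) hR) (fun s h0 h1 => by
        rw [← quad_expand K hsymm]
        linarith [hγmin _ (hmem s h0 h1)])
    have hq := quad_expand K hsymm b γ (β - γ) t
    have hnorm : euclNorm (γ + t • (β - γ) - γ) = r := by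
      rw [add_sub_cancel_left, ← htN]
      unfold euclNorm
      simp only [Pi.smul_apply, smul_eq_mul, mul_pow, ← Finset.mul_sum]
      rw [Real.sqrt_mul (sq_nonneg t), Real.sqrt_sq ht0.le]
    have hfx : f (γ + t • (β - γ)) ≤ f γ := by
      have h := hf.2 (Set.mem_univ γ) (Set.mem_univ β) (sub_nonneg.2 ht1) ht0.le
        (sub_add_cancel 1 t)
      have e : γ + t • (β - γ) = (1 - t) • γ + t • β := by
        rw [smul_sub, sub_smul, one_smul]; abel
      rw [e]
      simp only [smul_eq_mul] at h
      nlinarith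
    have ha := (abs_le.1 (happrox _ (hmem t ht0.le ht1) hnorm.le)).1
    have h1 : 0 ≤ t * (γ ⬝ᵥ K.mulVec (β - γ) - b ⬝ᵥ (β - γ)) := mul_nonneg ht0.le hg
    have h2 : t ^ 2 / 2 * (lam * euclNorm (β - γ) ^ 2)
        ≤ t ^ 2 / 2 * ((β - γ) ⬝ᵥ K.mulVec (β - γ)) :=
      mul_le_mul_of_nonneg_left hR (by positivity)
    have h3 : t ^ 2 / 2 * (lam * euclNorm (β - γ) ^ 2) = lam * r ^ 2 / 2 := by
      rw [← htN]; ring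
    linarith
  exact ⟨key, fun β hβ h => key β hβ (h γ hγQ)⟩
end
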